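/- arXiv:1501.02618 — 3 statements merged into one kernel-verified Lean document; each statement's English description precedes it below -/
import Mathlib

section
/- There exist absolute constants 0 < c ≤ C such that for every y ≥ 52 and t > 0 with y² ≥ 16·t, and every s with 0 < s ≤ 4t²/y², one has c·s·y²/t² ≤ (p(t,1,y) − p(t−s,1,y))/p(t,1,y) ≤ C·s·y²/t². (One may take c = 1/156.) -/
open Real MeasureTheory

/-- Modified Bessel function of the first kind, order 0. -/
noncomputable def I0 (z : ℝ) : ℝ := ∑' n : ℕ, (z/2)^(2*n) / ((n.factorial : ℝ))^2

/-- Modified Bessel function of the first kind, order 1. -/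
noncomputable def I1 (z : ℝ) : ℝ :=
  ∑' n : ℕ, (z/2)^(2*n+1) / ((n.factorial : ℝ) * ((n+1).factorial : ℝ))

/-- Heat kernel of the Bessel operator `d²/dx² + (1/x) d/dx` on `(0,∞)`
with respect to the measure `y dy`. -/
noncomputable def pk (t x y : ℝ) : ℝ :=
  t⁻¹ * Real.exp (-(x^2 + y^2)/(2*t)) * I0 (x*y/t)

/-- The function `h` from (AC): Dirichlet heat kernel of `(1/2) d²/dx²` on `(1,∞)`
multiplied by `(xy)⁻¹`. -/
noncomputable def hker (t x y : ℝ) : ℝ :=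
  (2*Real.pi*t)^(-(1:ℝ)/2) * (x*y)⁻¹ *
    (Real.exp (-(x-y)^2/(2*t)) - Real.exp (-(x+y-2)^2/(2*t)))

lemma I0_summable (z : ℝ) : Summable (fun n : ℕ => (z/2)^(2*n) / ((n.factorial : ℝ))^2) := by
  refine Summable.of_nonneg_of_le (fun n => ?_) (fun n => ?_)
    (Real.summable_pow_div_factorial ((z/2)^2))
  · rw [pow_mul]; positivity
  · rw [pow_mul]
    have h1 : (1:ℝ) ≤ (n.factorial : ℝ) := by exact_mod_cast Nat.one_le_iff_ne_zero.2 n.factorial_ne_zero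
    apply div_le_div_of_nonneg_left (by positivity) (by positivity)
    nlinarith

lemma I0_pos (z : ℝ) : 0 < I0 z := by
  unfold I0
  refine (I0_summable z).tsum_pos (fun n => ?_) 0 (by simp)
  rw [pow_mul]; positivity

lemma I0_mono {a b : ℝ} (ha : 0 ≤ a) (hab : a ≤ b) : I0 a ≤ I0 b := by
  unfold I0
  refine (I0_summable a).tsum_le_tsum (fun n => ?_) (I0_summable b)
  gcongr

noncomputable def TT (N : ℕ) (z : ℝ) : ℝ :=
  ∑ n ∈ Finset.range N, (z/2)^(2*n) / ((n.factorial : ℝ))^2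

noncomputable def DD (N : ℕ) (z : ℝ) : ℝ :=
  ∑ n ∈ Finset.range N, (z/2)^(2*n+1) / ((n.factorial : ℝ) * ((n+1).factorial : ℝ))

lemma TT_deriv (N : ℕ) (z : ℝ) : HasDerivAt (TT (N+1)) (DD N z) z := by
  induction N with
  | zero =>
    have : TT (0+1) = fun _ => (1:ℝ) := by funext w; simp [TT]
    rw [this]
    simpa [DD] using hasDerivAt_const z (1:ℝ)
  | succ N ih =>
    have h1 : TT (N+1+1) = fun w => TT (N+1) w + (w/2)^(2*(N+1)) / (((N+1).factorial : ℝ))^2 := by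
      funext w; simp only [TT]; rw [Finset.sum_range_succ]
    rw [h1]
    have h2 : DD (N+1) z = DD N z + (z/2)^(2*N+1) / ((N.factorial : ℝ) * ((N+1).factorial : ℝ)) := by
      simp only [DD]; rw [Finset.sum_range_succ]
    rw [h2]
    refine ih.add ?_
    have h3 := ((((hasDerivAt_id z).div_const 2).pow (2*(N+1))).div_const
      ((((N+1).factorial : ℝ))^2))
    refine h3.congr_deriv ?_
    have e : 2*(N+1) - 1 = 2*N+1 := by omega
    rw [e, Nat.factorial_succ]
    have : (N.factorial : ℝ) ≠ 0 := by positivity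
    have : (N:ℝ) + 1 ≠ 0 := by positivity
    push_cast
    simp only [id]
    field_simp

lemma DD_le (N : ℕ) (z : ℝ) :
    DD N z ≤ TT (N+1) z - (1/2) * ((z/2)^(2*N) / ((N.factorial : ℝ))^2) := by
  induction N with
  | zero => simp [DD, TT]; norm_num
  | succ N ih =>
    have h1 : TT (N+1+1) z = TT (N+1) z + (z/2)^(2*(N+1)) / (((N+1).factorial : ℝ))^2 := by
      simp only [TT]; rw [Finset.sum_range_succ]
    have h2 : DD (N+1) z = DD N z + (z/2)^(2*N+1) / ((N.factorial : ℝ) * ((N+1).factorial : ℝ)) := by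
      simp only [DD]; rw [Finset.sum_range_succ]
    rw [h1, h2]
    have e1 : (z/2)^(2*N) / ((N.factorial : ℝ))^2 = ((z/2)^N / (N.factorial : ℝ))^2 := by
      rw [div_pow _ (N.factorial : ℝ), ← pow_mul, mul_comm]
    have e2 : (z/2)^(2*(N+1)) / (((N+1).factorial : ℝ))^2
        = ((z/2)^(N+1) / ((N+1).factorial : ℝ))^2 := by
      rw [div_pow _ ((N+1).factorial : ℝ), ← pow_mul, mul_comm]
    have e3 : (z/2)^(2*N+1) / ((N.factorial : ℝ) * ((N+1).factorial : ℝ))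
        = ((z/2)^N / (N.factorial : ℝ)) * ((z/2)^(N+1) / ((N+1).factorial : ℝ)) := by
      rw [div_mul_div_comm, ← pow_add]; congr 2; ring
    rw [e1] at ih
    rw [e2, e3]
    nlinarith [sq_nonneg ((z/2)^N / (N.factorial : ℝ) - (z/2)^(N+1) / ((N+1).factorial : ℝ))]

lemma TT_anti (N : ℕ) : Antitone (fun z => Real.exp (-z) * TT (N+1) z) := by
  have hd : ∀ z, HasDerivAt (fun z => Real.exp (-z) * TT (N+1) z)
      (Real.exp (-z) * (-1) * TT (N+1) z + Real.exp (-z) * DD N z) z := fun z =>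
    ((hasDerivAt_neg z).exp).mul (TT_deriv N z)
  refine antitone_of_deriv_nonpos (fun z => (hd z).differentiableAt) (fun z => ?_)
  rw [(hd z).deriv]
  have h := DD_le N z
  have h0 : 0 ≤ (z/2)^(2*N) / ((N.factorial : ℝ))^2 := by rw [pow_mul]; positivity
  have := mul_nonneg (Real.exp_pos (-z)).le (by linarith : 0 ≤ TT (N+1) z - DD N z)
  linarith

lemma I0_exp {a b : ℝ} (hab : a ≤ b) : I0 b ≤ Real.exp (b - a) * I0 a := by
  have key : ∀ z, Filter.Tendsto (fun N => Real.exp (-z) * TT (N+1) z) Filter.atTop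
      (nhds (Real.exp (-z) * I0 z)) := fun z =>
    (((I0_summable z).hasSum.tendsto_sum_nat).comp (Filter.tendsto_add_atTop_nat 1)).const_mul _
  have h := le_of_tendsto_of_tendsto' (key b) (key a) (fun N => TT_anti N hab)
  have h2 := mul_le_mul_of_nonneg_left h (Real.exp_pos b).le
  rw [← mul_assoc, ← mul_assoc, ← Real.exp_add, ← Real.exp_add] at h2
  simpa [sub_eq_add_neg] using h2

theorem bessel_heat_kernel_time_difference_small_s :
    ∃ c C : ℝ, 0 < c ∧ c ≤ C ∧ ∀ y t s : ℝ, 52 ≤ y → 0 < t → 16*t ≤ y^2 →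
      0 < s → s ≤ 4*t^2/y^2 →
      c * (s * y^2/t^2) ≤ (pk t 1 y - pk (t-s) 1 y) / pk t 1 y ∧
      (pk t 1 y - pk (t-s) 1 y) / pk t 1 y ≤ C * (s * y^2/t^2) := by
  refine ⟨1/10, 2, by norm_num, by norm_num, ?_⟩
  intro y t s hy ht hty hs hst
  have hy0 : 0 < y := by linarith
  have hsy : s * y^2 ≤ 4*t^2 := by rwa [le_div_iff₀ (by positivity)] at hst
  have hs4 : s ≤ t/4 := by
    have : s * (16*t) ≤ s * y^2 := mul_le_mul_of_nonneg_left hty hs.le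
    have h : t * (4*s) ≤ t * t := by nlinarith
    linarith [le_of_mul_le_mul_left h ht]
  have hτ : 0 < t - s := by linarith
  have hpk : 0 < pk t 1 y := by
    unfold pk
    have := I0_pos (1*y/t)
    positivity
  set x := s * y^2/t^2 with hx
  have hx0 : 0 < x := by positivity
  have hx4 : x ≤ 4 := by rw [hx, div_le_iff₀ (by positivity)]; exact hsy
  set d := s / (t * (t-s)) with hd
  have hd0 : 0 < d := by positivity
  have hdy1 : x ≤ d * y^2 := by
    rw [hx, hd, div_mul_eq_mul_div]
    apply div_le_div_of_nonneg_left (by positivity) (by positivity)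
    nlinarith
  have hdy2 : d * y^2 ≤ 4/3 * x := by
    have : 4/3 * x = s * y^2 / (3/4*t^2) := by rw [hx]; field_simp
    rw [this, hd, div_mul_eq_mul_div]
    apply div_le_div_of_nonneg_left (by positivity) (by positivity)
    nlinarith
  have hexp : Real.exp (-(1^2 + y^2)/(2*(t-s)))
      = Real.exp (-(1+y^2)/2*d) * Real.exp (-(1^2 + y^2)/(2*t)) := by
    rw [← Real.exp_add]; congr 1
    rw [hd]; field_simp; ring
  have hinv : (t-s)⁻¹ = (1 + t*d) * t⁻¹ := by
    rw [hd]; field_simp; ring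
  have harg : 1*y/(t-s) - 1*y/t = y*d := by
    rw [hd]; field_simp; ring
  have hle : 1*y/t ≤ 1*y/(t-s) := by
    have : 0 < y*d := by positivity
    linarith
  have hI1 := I0_exp hle
  rw [harg] at hI1
  have hI2 := I0_mono (by positivity : 0 ≤ 1*y/t) hle
  have hIp := I0_pos (1*y/t)
  -- upper and lower bounds of the kernel at the earlier time
  have hup : pk (t-s) 1 y ≤ Real.exp (-(2/5*x)) * pk t 1 y := by
    have h1 : 1 + t*d ≤ Real.exp (t*d) := by linarith [Real.add_one_le_exp (t*d)]
    have h2 : pk (t-s) 1 y ≤ (Real.exp (t*d) * t⁻¹) *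
        (Real.exp (-(1+y^2)/2*d) * Real.exp (-(1^2 + y^2)/(2*t))) *
        (Real.exp (y*d) * I0 (1*y/t)) := by
      unfold pk
      rw [hexp, hinv]
      have := (I0_pos (1*y/(t-s))).le
      gcongr
    have h3 : (Real.exp (t*d) * t⁻¹) *
        (Real.exp (-(1+y^2)/2*d) * Real.exp (-(1^2 + y^2)/(2*t))) *
        (Real.exp (y*d) * I0 (1*y/t))
        = Real.exp (t*d + -(1+y^2)/2*d + y*d) * pk t 1 y := by
      unfold pk
      rw [Real.exp_add, Real.exp_add]; ring
    rw [h3] at h2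
    refine h2.trans (mul_le_mul_of_nonneg_right (Real.exp_le_exp.2 ?_) hpk.le)
    have h4 : t - (1+y^2)/2 + y ≤ -(2/5*y^2) := by nlinarith
    have h5 := mul_le_mul_of_nonneg_left h4 hd0.le
    nlinarith
  have hlow : Real.exp (-(1+y^2)/2*d) * pk t 1 y ≤ pk (t-s) 1 y := by
    have h2 : (1 * t⁻¹) *
        (Real.exp (-(1+y^2)/2*d) * Real.exp (-(1^2 + y^2)/(2*t))) *
        (I0 (1*y/t)) ≤ pk (t-s) 1 y := by
      unfold pk
      rw [hexp, hinv]
      have : 0 < t*d := by positivity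
      gcongr
      linarith
    refine le_trans (le_of_eq ?_) h2
    unfold pk
    ring
  constructor
  · rw [le_div_iff₀ hpk]
    have h1 : Real.exp (-(2/5*x)) ≤ 1 - 1/10*x := by
      have h2 : 1 + 2/5*x ≤ Real.exp (2/5*x) := by linarith [Real.add_one_le_exp (2/5*x)]
      rw [Real.exp_neg]
      refine (inv_anti₀ (by positivity) h2).trans ?_
      rw [inv_le_iff_one_le_mul₀ (by positivity)]
      nlinarith
    have := mul_le_mul_of_nonneg_right h1 hpk.le
    linarith
  · rw [div_le_iff₀ hpk]
    have h1 : 1 - 2*x ≤ Real.exp (-(1+y^2)/2*d) := by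
      have h2 := Real.add_one_le_exp (-(1+y^2)/2*d)
      have h3 : (1:ℝ) ≤ y^2 := by nlinarith
      have h4 := mul_le_mul_of_nonneg_right h3 hd0.le
      nlinarith
    have := mul_le_mul_of_nonneg_right h1 hpk.le
    linarith
end

section
/- There exist absolute constants 0 < c ≤ C such that for every x > 1, c·min(x−1, √x·exp(−(x−1)²/(4x))) ≤ (x−1)·∫₀^{2x} s^{−1/2}·exp(−(x−1)²/(2s)) ds ≤ C·min(x−1, √x·exp(−(x−1)²/(4x))). -/
open Real MeasureTheory

lemma aux_cont (K b : ℝ) (hK : 0 ≤ K) :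
    ContinuousOn (fun s : ℝ => Real.sqrt s * Real.exp (-K/(2*s))) (Set.Icc 0 b) := by
  intro s hs
  rcases hs.1.eq_or_lt with h | h
  · subst h
    unfold ContinuousWithinAt
    simp only [Real.sqrt_zero, zero_mul]
    have h1 : Filter.Tendsto (fun s : ℝ => Real.sqrt s) (nhdsWithin 0 (Set.Icc 0 b)) (nhds 0) := by
      have := (Real.continuous_sqrt.tendsto 0)
      rw [Real.sqrt_zero] at this
      exact this.mono_left nhdsWithin_le_nhds
    refine tendsto_of_tendsto_of_tendsto_of_le_of_le' tendsto_const_nhds h1 ?_ ?_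
    · filter_upwards with s
      positivity
    · filter_upwards [self_mem_nhdsWithin] with s hs
      have : Real.exp (-K/(2*s)) ≤ 1 := by
        apply Real.exp_le_one_iff.2
        apply div_nonpos_of_nonpos_of_nonneg (by linarith)
        linarith [hs.1]
      nlinarith [Real.sqrt_nonneg s]
  · apply ContinuousAt.continuousWithinAt
    apply ContinuousAt.mul Real.continuous_sqrt.continuousAt
    apply ContinuousAt.rexp
    apply ContinuousAt.div continuousAt_const (by fun_prop)
    positivity

lemma aux_rpow (s : ℝ) (hs : 0 < s) : s^(-(1:ℝ)/2) = 1 / Real.sqrt s := by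
  rw [neg_div, Real.rpow_neg hs.le, Real.sqrt_eq_rpow, one_div, one_div]

lemma aux_deriv (K s : ℝ) (hs : 0 < s) :
    HasDerivAt (fun s : ℝ => Real.sqrt s * Real.exp (-K/(2*s)))
      ((1/2 + K/(2*s)) * (s^(-(1:ℝ)/2) * Real.exp (-K/(2*s)))) s := by
  rw [aux_rpow s hs]
  have h1 := Real.hasDerivAt_sqrt hs.ne'
  have h2 : HasDerivAt (fun s : ℝ => -K/(2*s)) (K/(2*s^2)) s := by
    have := (hasDerivAt_const s (-K)).div ((hasDerivAt_id s).const_mul 2) (by simp; positivity)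
    refine this.congr_deriv ?_
    simp
    field_simp
  refine (h1.mul h2.exp).congr_deriv ?_
  have hq : 0 < Real.sqrt s := Real.sqrt_pos.2 hs
  have hqs : Real.sqrt s ^ 2 = s := Real.sq_sqrt hs.le
  generalize Real.exp (-K/(2*s)) = e
  generalize Real.sqrt s = q at *
  subst hqs
  field_simp

lemma aux_deriv2 (K s : ℝ) (hs : 0 < s) :
    HasDerivAt (fun s : ℝ => s * (Real.sqrt s * Real.exp (-K/(2*s))))
      ((3/2 * s + K/2) * (s^(-(1:ℝ)/2) * Real.exp (-K/(2*s)))) s := by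
  refine ((hasDerivAt_id s).mul (aux_deriv K s hs)).congr_deriv ?_
  rw [aux_rpow s hs]
  have hq : 0 < Real.sqrt s := Real.sqrt_pos.2 hs
  have hqs : Real.sqrt s ^ 2 = s := Real.sq_sqrt hs.le
  simp only [id]
  generalize Real.exp (-K/(2*s)) = e
  generalize Real.sqrt s = q at *
  subst hqs
  field_simp
  ring

lemma aux_int (K b : ℝ) (hK : 0 ≤ K) (hb : 0 ≤ b) :
    IntegrableOn (fun s : ℝ => s^(-(1:ℝ)/2) * Real.exp (-K/(2*s))) (Set.Icc 0 b) := by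
  have h : IntervalIntegrable (fun s : ℝ => s^(-(1:ℝ)/2)) volume 0 b :=
    intervalIntegral.intervalIntegrable_rpow' (by norm_num)
  rw [intervalIntegrable_iff_integrableOn_Icc_of_le hb] at h
  refine Integrable.mono h (by fun_prop) ?_
  filter_upwards [ae_restrict_mem measurableSet_Icc] with s hs
  rw [norm_mul]
  have : ‖Real.exp (-K/(2*s))‖ ≤ 1 := by
    rw [Real.norm_eq_abs, Real.abs_exp]
    apply Real.exp_le_one_iff.2
    apply div_nonpos_of_nonpos_of_nonneg (by linarith)
    linarith [hs.1]
  exact mul_le_of_le_one_right (norm_nonneg _) this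

lemma aux_bounds (K b : ℝ) (hK : 0 ≤ K) (hb : 0 ≤ b) (I : ℝ)
    (hI : I = ∫ s in Set.Ioo (0:ℝ) b, s^(-(1:ℝ)/2) * Real.exp (-K/(2*s))) :
    I ≤ 2 * (Real.sqrt b * Real.exp (-K/(2*b))) ∧
    K/2 * I ≤ b * (Real.sqrt b * Real.exp (-K/(2*b))) ∧
    b * (Real.sqrt b * Real.exp (-K/(2*b))) ≤ (3/2 * b + K/2) * I := by
  rw [← integral_Ioc_eq_integral_Ioo, ← intervalIntegral.integral_of_le hb] at hI
  have hfi := aux_int K b hK hb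
  have hc := aux_cont K b hK
  have hc2 : ContinuousOn (fun s : ℝ => s * (Real.sqrt s * Real.exp (-K/(2*s)))) (Set.Icc 0 b) :=
    continuousOn_id.mul hc
  have hpos : ∀ s ∈ Set.Ioo 0 b, 0 ≤ s^(-(1:ℝ)/2) * Real.exp (-K/(2*s)) := fun s hs =>
    mul_nonneg (Real.rpow_nonneg hs.1.le _) (Real.exp_pos _).le
  have e1 := intervalIntegral.integral_le_sub_of_hasDeriv_right_of_le hb hc
    (fun s hs => (aux_deriv K s hs.1).hasDerivWithinAt) (hfi.const_mul (1/2))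
    (fun s hs => mul_le_mul_of_nonneg_right
      (by have : 0 ≤ K/(2*s) := div_nonneg hK (by linarith [hs.1])
          linarith) (hpos s hs))
  have e2 := intervalIntegral.integral_le_sub_of_hasDeriv_right_of_le hb hc2
    (fun s hs => (aux_deriv2 K s hs.1).hasDerivWithinAt) (hfi.const_mul (K/2))
    (fun s hs => mul_le_mul_of_nonneg_right (by linarith [hs.1]) (hpos s hs))
  have e3 := intervalIntegral.sub_le_integral_of_hasDeriv_right_of_le hb hc2
    (fun s hs => (aux_deriv2 K s hs.1).hasDerivWithinAt) (hfi.const_mul (3/2*b+K/2))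
    (fun s hs => mul_le_mul_of_nonneg_right (by linarith [hs.2]) (hpos s hs))
  rw [intervalIntegral.integral_const_mul, ← hI] at e1 e2 e3
  simp only [Real.sqrt_zero, zero_mul, sub_zero] at e1 e2 e3
  exact ⟨by linarith, e2, e3⟩

theorem incomplete_gamma_integral_estimate :
    ∃ c C : ℝ, 0 < c ∧ c ≤ C ∧ ∀ x : ℝ, 1 < x →
      c * min (x-1) (Real.sqrt x * Real.exp (-(x-1)^2/(4*x))) ≤
        (x-1) * ∫ s in Set.Ioo (0:ℝ) (2*x), s^(-(1:ℝ)/2) * Real.exp (-(x-1)^2/(2*s)) ∧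
      (x-1) * (∫ s in Set.Ioo (0:ℝ) (2*x), s^(-(1:ℝ)/2) * Real.exp (-(x-1)^2/(2*s))) ≤
        C * min (x-1) (Real.sqrt x * Real.exp (-(x-1)^2/(4*x))) := by
  refine ⟨1/10, 32, by norm_num, by norm_num, fun x hx => ?_⟩
  obtain ⟨h1, h2, h3⟩ := aux_bounds ((x-1)^2) (2*x) (sq_nonneg _) (by linarith) _ rfl
  generalize (∫ s in Set.Ioo (0:ℝ) (2*x), s^(-(1:ℝ)/2) * Real.exp (-(x-1)^2/(2*s))) = I at *
  have hE : (2*(2*x)) = 4*x := by ring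
  rw [hE, Real.sqrt_mul (by norm_num)] at h1 h2 h3
  have hw1 : (7/5:ℝ) ≤ Real.sqrt 2 := Real.le_sqrt_of_sq_le (by norm_num)
  have hw2 : Real.sqrt 2 ≤ 3/2 := Real.sqrt_le_iff.2 (by norm_num)
  have hq1 : 1 ≤ Real.sqrt x := Real.le_sqrt_of_sq_le (by linarith)
  have hqs : Real.sqrt x ^ 2 = x := Real.sq_sqrt (by linarith)
  have hE0 := Real.exp_pos (-(x-1)^2/(4*x))
  have hE1 : Real.exp (-(x-1)^2/(4*x)) ≤ 1 := by
    apply Real.exp_le_one_iff.2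
    apply div_nonpos_of_nonpos_of_nonneg (by nlinarith) (by linarith)
  have hE2 : x ≤ 2 → 3/4 ≤ Real.exp (-(x-1)^2/(4*x)) := by
    intro h
    have := Real.add_one_le_exp (-(x-1)^2/(4*x))
    have h' : -(1/4) ≤ -(x-1)^2/(4*x) := by
      rw [le_div_iff₀ (by linarith)]
      nlinarith
    linarith
  generalize Real.exp (-(x-1)^2/(4*x)) = E at *
  generalize Real.sqrt x = q at *
  generalize Real.sqrt 2 = w at *
  have hqE : 0 < q * E := by positivity
  have hl : 7/5 * (q * E) ≤ w * q * E := by nlinarith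
  have hu : w * q * E ≤ 3/2 * (q * E) := by nlinarith
  generalize w * q * E = T at *
  have hd : 0 < x - 1 := by linarith
  have hK : 0 < 3/2*(2*x) + (x-1)^2/2 := by positivity
  have hT : 0 < T := by linarith
  have hI0 : 0 < I := by
    have : 0 < 2 * x * T := by positivity
    exact pos_of_mul_pos_right (this.trans_le h3) hK.le
  rcases le_total x 2 with h | h
  · have hE3 := hE2 h
    have hqE2 : q * E ≤ q := by nlinarith
    have hq2 : q ≤ 3/2 := by nlinarith
    have hI1 : I ≤ 5 := by linarith
    have hI2 : 1/10 ≤ I := by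
      have a1 : 3/4 ≤ q * E := by nlinarith
      have a2 : 2 * 1 ≤ 2 * x * T := by nlinarith
      have a3 : (3/2*(2*x) + (x-1)^2/2) * I ≤ 20 * I :=
        mul_le_mul_of_nonneg_right (by nlinarith) hI0.le
      linarith
    constructor
    · have := min_le_left (x-1) (q*E)
      nlinarith
    · rw [mul_min_of_nonneg _ _ (by norm_num)]
      apply le_min
      · nlinarith
      · nlinarith
  · have hdx : x/2 ≤ x - 1 := by linarith
    have hA : (x-1) * I ≤ 12 * (q * E) := by
      have : x/2 * ((x-1) * I) ≤ (x-1) * ((x-1) * I) :=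
        mul_le_mul_of_nonneg_right hdx (by positivity)
      have : x * ((x-1) * I) ≤ x * (8 * T) := by nlinarith
      have := le_of_mul_le_mul_left this (by linarith)
      linarith
    constructor
    · have := min_le_right (x-1) (q*E)
      have a3 : (3/2*(2*x) + (x-1)^2/2) * I ≤ (2*x*x) * I :=
        mul_le_mul_of_nonneg_right (by nlinarith) hI0.le
      have a4 : x * T ≤ x * (x * I) := by nlinarith
      have a5 := le_of_mul_le_mul_left a4 (by linarith)
      nlinarith
    · rw [mul_min_of_nonneg _ _ (by norm_num)]
      apply le_min
      · have : q ≤ x := by nlinarith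
        have : q * E ≤ q := by nlinarith
        linarith
      · linarith
end

section
/- There exist absolute constants 0 < c ≤ C such that for all x > 1, y ≥ 52 and t > 0 with xy ≤ t and y² ≥ 16·t, one has c·t²/(y²·ln²(3t/y)) ≤ ∫_{2x}^{4t²/y²} (ln s · ln(s/x))^{−1}·exp(−(x−1)²/(2s)) ds ≤ C·t²/(y²·ln²(3t/y)). (Under these hypotheses 2x < 4t²/y², so the integration interval is nonempty and ln s > 0, ln(s/x) > 0 on it.) -/
open Real MeasureTheory

lemma lie_log_bound {w : ℝ} (hw : 0 < w) : Real.log w ≤ 2 * √w := by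
  have h1 := Real.log_le_sub_one_of_pos (Real.sqrt_pos.2 hw)
  rw [Real.log_sqrt hw.le] at h1
  linarith

lemma lie_upper {x T s : ℝ} (hx : 1 < x) (hxT : x ≤ T) (hs : 2 * x < s) (hs2 : s < 4 * T ^ 2) :
    (Real.log s * Real.log (s/x))⁻¹ * Real.exp (-(x-1)^2/(2*s)) ≤
      98 * T / (Real.log (3*T))^2 * s ^ (-(1/2) : ℝ) := by
  have hs0 : 0 < s := by linarith
  have hT : 1 < T := by linarith
  have hL : 0 < Real.log (3*T) := Real.log_pos (by linarith)
  have hq : 0 < √s := Real.sqrt_pos.2 hs0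
  have hqT : √s ≤ 2 * T := by
    rw [show 2 * T = √((2*T)^2) from (Real.sqrt_sq (by linarith)).symm]
    exact Real.sqrt_le_sqrt (by nlinarith)
  have hqs : √s ^ 2 = s := Real.sq_sqrt hs0.le
  obtain ⟨w, hw⟩ : ∃ w, w = 2 * T / √s := ⟨_, rfl⟩
  have hw1 : 1 ≤ w := by rw [hw, le_div_iff₀ hq]; linarith
  have hw0 : 0 < w := by linarith
  have hsx : 2 < s / x := by rw [lt_div_iff₀ (by linarith)]; linarith
  have hl2 : 0.69 < Real.log (s/x) := by
    have := Real.log_lt_log (by norm_num) hsx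
    have := Real.log_two_gt_d9
    linarith
  have hls : Real.log (s/x) ≤ Real.log s := by
    apply Real.log_le_log (by linarith)
    exact div_le_self hs0.le hx.le
  have hmain : Real.log (3*T) ≤ Real.log (s/x) + 2 * Real.log w := by
    have : Real.log (s/x) + 2 * Real.log w = Real.log (s/x * w^2) := by
      rw [Real.log_mul (by linarith) (by positivity), Real.log_pow]; norm_num
    rw [this]
    apply Real.log_le_log (by linarith)
    have e : s / x * w^2 = 4 * T^2 / x := by
      rw [hw, div_pow, hqs]; field_simp; ring
    rw [e, le_div_iff₀ (by linarith)]
    nlinarith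
  have hlw := lie_log_bound hw0
  have hsw : 1 ≤ √w := by rw [← Real.sqrt_one]; exact Real.sqrt_le_sqrt hw1
  have h7 : Real.log (3*T) ≤ 7 * √w * Real.log (s/x) := by nlinarith
  have hsq : (Real.log (3*T))^2 ≤ 49 * w * (Real.log (s/x))^2 := by
    have := pow_le_pow_left₀ hL.le h7 2
    have e : √w ^ 2 = w := Real.sq_sqrt hw0.le
    calc _ ≤ _ := this
      _ = 49 * (√w^2) * (Real.log (s/x))^2 := by ring
      _ = _ := by rw [e]
  have hexp : Real.exp (-(x-1)^2/(2*s)) ≤ 1 := by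
    rw [Real.exp_le_one_iff]
    apply div_nonpos_of_nonpos_of_nonneg <;> nlinarith [sq_nonneg (x-1)]
  have hp : s ^ (-(1/2) : ℝ) = (√s)⁻¹ := by
    rw [Real.rpow_neg hs0.le, ← Real.sqrt_eq_rpow]
  have hr : 98 * T / (Real.log (3*T))^2 * s ^ (-(1/2) : ℝ) = 49 * w / (Real.log (3*T))^2 := by
    rw [hp, hw]; field_simp; norm_num
  rw [hr]
  have hl0 : 0 < Real.log (s/x) := by linarith
  calc _ ≤ (Real.log s * Real.log (s/x))⁻¹ * 1 := by
        apply mul_le_mul_of_nonneg_left hexp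
        have : 0 < Real.log s := by linarith
        positivity
    _ ≤ (Real.log (s/x) ^ 2)⁻¹ := by
        rw [mul_one]
        apply inv_anti₀ (by positivity)
        nlinarith
    _ ≤ _ := by
        rw [inv_eq_one_div, div_le_div_iff₀ (by positivity) (by positivity)]
        linarith

lemma lie_nonneg {x s : ℝ} (hx : 1 < x) (hs : 2 * x < s) :
    0 ≤ (Real.log s * Real.log (s/x))⁻¹ * Real.exp (-(x-1)^2/(2*s)) := by
  have h1 : 0 < Real.log s := Real.log_pos (by linarith)
  have h2 : 0 < Real.log (s/x) := Real.log_pos (by rw [lt_div_iff₀ (by linarith)]; linarith)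
  positivity

lemma lie_lower {x T s : ℝ} (hx : 1 < x) (hxT : x ≤ T) (hs : 3 * T ^ 2 < s)
    (hs2 : s < 4 * T ^ 2) :
    1 / (8 * (Real.log (3*T))^2) ≤
      (Real.log s * Real.log (s/x))⁻¹ * Real.exp (-(x-1)^2/(2*s)) := by
  have hT : 1 < T := by linarith
  have hL : 0 < Real.log (3*T) := Real.log_pos (by linarith)
  have hs0 : 0 < s := by nlinarith
  have hsx : 1 < s / x := by rw [lt_div_iff₀ (by linarith)]; nlinarith
  have hl : 0 < Real.log (s/x) := Real.log_pos hsx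
  have hls : Real.log (s/x) ≤ Real.log s := by
    apply Real.log_le_log (by linarith)
    exact div_le_self hs0.le hx.le
  have hlL : Real.log s ≤ 2 * Real.log (3*T) := by
    have : 2 * Real.log (3*T) = Real.log ((3*T)^2) := by rw [Real.log_pow]; norm_num
    rw [this]
    exact Real.log_le_log hs0 (by nlinarith)
  have hexp : 1 / 2 ≤ Real.exp (-(x-1)^2/(2*s)) := by
    have h := Real.add_one_le_exp (-(x-1)^2/(2*s))
    have : -(1/2) ≤ -(x-1)^2/(2*s) := by
      rw [le_div_iff₀ (by linarith)]
      nlinarith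
    linarith
  have hinv : 1 / (4 * (Real.log (3*T))^2) ≤ (Real.log s * Real.log (s/x))⁻¹ := by
    rw [inv_eq_one_div]
    have h0 : 0 < Real.log s := by linarith
    apply one_div_le_one_div_of_le (by positivity)
    nlinarith
  calc _ = 1 / (4 * (Real.log (3*T))^2) * (1/2) := by field_simp; norm_num
    _ ≤ _ := by
      have h0 : 0 < Real.log s := by linarith
      apply mul_le_mul hinv hexp (by norm_num) (by positivity)

lemma lie_core {x T : ℝ} (hx : 1 < x) (hxT : x ≤ T) :
    1/8 * (T^2 / (Real.log (3*T))^2) ≤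
        (∫ s in Set.Ioo (2*x) (4*T^2),
          (Real.log s * Real.log (s/x))⁻¹ * Real.exp (-(x-1)^2/(2*s))) ∧
      (∫ s in Set.Ioo (2*x) (4*T^2),
          (Real.log s * Real.log (s/x))⁻¹ * Real.exp (-(x-1)^2/(2*s))) ≤
        392 * (T^2/(Real.log (3*T))^2) := by
  have hT : 1 < T := by linarith
  have hL : 0 < Real.log (3*T) := Real.log_pos (by linarith)
  have hp0 : IntegrableOn (fun s : ℝ => s ^ (-(1/2) : ℝ)) (Set.Ioc 0 (4*T^2)) := by
    rw [← intervalIntegrable_iff_integrableOn_Ioc_of_le (by positivity)]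
    exact intervalIntegral.intervalIntegrable_rpow' (by norm_num)
  have hsub : Set.Ioo (2*x) (4*T^2) ⊆ Set.Ioc 0 (4*T^2) := fun s hs =>
    ⟨by linarith [hs.1], hs.2.le⟩
  have hg0 := hp0.const_mul (98 * T / (Real.log (3*T))^2)
  have hg := IntegrableOn.mono_set hg0 hsub
  have hf : IntegrableOn (fun s : ℝ => (Real.log s * Real.log (s/x))⁻¹ *
      Real.exp (-(x-1)^2/(2*s))) (Set.Ioo (2*x) (4*T^2)) := by
    refine Integrable.mono' hg (Measurable.aestronglyMeasurable (by fun_prop)) ?_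
    refine (ae_restrict_iff' measurableSet_Ioo).2 (ae_of_all _ fun s hs => ?_)
    rw [Real.norm_of_nonneg (lie_nonneg hx hs.1)]
    exact lie_upper hx hxT hs.1 hs.2
  constructor
  · have hsub2 : Set.Ioo (3*T^2) (4*T^2) ⊆ Set.Ioo (2*x) (4*T^2) := fun s hs =>
      ⟨by nlinarith [hs.1], hs.2⟩
    calc _ = ∫ s in Set.Ioo (3*T^2) (4*T^2), 1 / (8 * (Real.log (3*T))^2) := by
          rw [setIntegral_const, Measure.real, Real.volume_Ioo, ENNReal.toReal_ofReal (by nlinarith),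
            smul_eq_mul]
          field_simp; norm_num
      _ ≤ ∫ s in Set.Ioo (3*T^2) (4*T^2),
          (Real.log s * Real.log (s/x))⁻¹ * Real.exp (-(x-1)^2/(2*s)) := by
          refine setIntegral_mono_on ?_ (hf.mono_set hsub2) measurableSet_Ioo
            fun s hs => lie_lower hx hxT hs.1 hs.2
          exact integrableOn_const (by simp)
      _ ≤ _ := by
          refine setIntegral_mono_set hf ?_ hsub2.eventuallyLE
          exact (ae_restrict_iff' measurableSet_Ioo).2 (ae_of_all _ fun s hs => lie_nonneg hx hs.1)
  · calc _ ≤ ∫ s in Set.Ioo (2*x) (4*T^2),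
          98 * T / (Real.log (3*T))^2 * s ^ (-(1/2) : ℝ) :=
          setIntegral_mono_on hf hg measurableSet_Ioo
            fun s hs => lie_upper hx hxT hs.1 hs.2
      _ ≤ ∫ s in Set.Ioc 0 (4*T^2), 98 * T / (Real.log (3*T))^2 * s ^ (-(1/2) : ℝ) := by
          refine setIntegral_mono_set hg0 ?_ hsub.eventuallyLE
          refine (ae_restrict_iff' measurableSet_Ioc).2 (ae_of_all _ fun s hs => ?_)
          have := hs.1
          show 0 ≤ 98 * T / (Real.log (3*T))^2 * s ^ (-(1/2) : ℝ)
          positivity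
      _ = _ := by
          rw [← intervalIntegral.integral_of_le (by positivity),
            intervalIntegral.integral_const_mul, integral_rpow (Or.inl (by norm_num))]
          have e : (4*T^2) ^ (-(1/2) + 1 : ℝ) = 2 * T := by
            rw [show (-(1/2) + 1 : ℝ) = 1/2 by norm_num, ← Real.sqrt_eq_rpow,
              show 4*T^2 = (2*T)^2 by ring, Real.sqrt_sq (by linarith)]
          rw [e, Real.zero_rpow (by norm_num)]
          ring

theorem log_integral_estimate :
    ∃ c C : ℝ, 0 < c ∧ c ≤ C ∧ ∀ x y t : ℝ, 1 < x → 52 ≤ y → 0 < t →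
      x*y ≤ t → 16*t ≤ y^2 →
      c * (t^2/(y^2 * (Real.log (3*t/y))^2)) ≤
        (∫ s in Set.Ioo (2*x) (4*t^2/y^2),
          (Real.log s * Real.log (s/x))⁻¹ * Real.exp (-(x-1)^2/(2*s))) ∧
      (∫ s in Set.Ioo (2*x) (4*t^2/y^2),
          (Real.log s * Real.log (s/x))⁻¹ * Real.exp (-(x-1)^2/(2*s))) ≤
        C * (t^2/(y^2 * (Real.log (3*t/y))^2)) := by
  refine ⟨1/8, 392, by norm_num, by norm_num, fun x y t hx hy ht hxy _ => ?_⟩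
  have h := lie_core hx ((le_div_iff₀ (by linarith : (0:ℝ) < y)).2 hxy)
  rw [show 4*t^2/y^2 = 4*(t/y)^2 by ring, show 3*t/y = 3*(t/y) by ring, ← div_div, ← div_pow]
  exact h
end
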